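/- Lower bound on the projected gradient away from the optimum of p-norm minimization: Let A ∈ ℝ^{n×d} have full column rank and b ∈ ℝ^d. Let p ≥ 1, let x̂ ∈ ℝⁿ, let g ∈ ℝⁿ be defined by gᵢ := p·|x̂ᵢ|^{p−2}·x̂ᵢ (with the convention gᵢ := 0 when x̂ᵢ = 0), and let x* attain the minimum of ‖x‖_p^p over {x ∈ ℝⁿ : Aᵀx = b}. Let 0 < ε < 1 and κ > 1 be such that ‖Aᵀx̂ − b‖₂ ≤ ε/(2κ^{3.5}), ‖x̂‖_p^p > (1+ε)·‖x*‖_p^p, ‖x*‖_p^p ≥ 1/κ, and ‖AᵀA‖_F, ‖(AᵀA)⁻¹‖_F, ‖g‖₂, ‖x* − x̂‖₂ ≤ κ. Then ‖(I − A(AᵀA)⁻¹Aᵀ)·g‖₂ ≥ ε/(2κ²). -/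

import Mathlib

/-!
By convexity of `x ↦ ‖x‖_p^p`, with `g` a (sub)gradient at `x̂`, the gap in objective values is
controlled by `g`: `ε / κ < ‖x̂‖_p^p - ‖x*‖_p^p ≤ g ⬝ (x̂ - x*)`
(`abs_rpow_tangent_le`, coordinatewise). Write `Q = A (AᵀA)⁻¹ Aᵀ`, and split
`g` along `I - Q` and `Q`. The first part contributes at most `κ ‖(I - Q) g‖₂`. The second equals
`g ⬝ A (AᵀA)⁻¹ r` with `r = Aᵀ x̂ - b`; since `‖A (AᵀA)⁻¹ r‖₂² = r ⬝ (AᵀA)⁻¹ r ≤ κ ‖r‖₂²`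
(`vecNorm2_mulVec_gram_inv_le`), it is at
most `κ · κ^{1/2} · ε / (2 κ^{3.5}) = ε / (2 κ²)`. Hence
`κ ‖(I - Q) g‖₂ ≥ ε / κ - ε / (2 κ²) ≥ ε / (2 κ)`.
-/

open Matrix

/-- Frobenius norm of a real matrix. -/
noncomputable def frobNorm {m n : Type*} [Fintype m] [Fintype n] (M : Matrix m n ℝ) : ℝ :=
  Real.sqrt (∑ i, ∑ j, (M i j) ^ 2)

/-- Euclidean norm of a real vector. -/
noncomputable def vecNorm2 {ι : Type*} [Fintype ι] (v : ι → ℝ) : ℝ :=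
  Real.sqrt (∑ i, (v i) ^ 2)

/-- The `p`-th power of the `p`-norm of a vector: `‖v‖_p^p = Σᵢ |vᵢ|^p`. -/
noncomputable def pnormP {ι : Type*} [Fintype ι] (p : ℝ) (v : ι → ℝ) : ℝ :=
  ∑ i, |v i| ^ p

theorem vecNorm2_nonneg {ι : Type*} [Fintype ι] (v : ι → ℝ) : 0 ≤ vecNorm2 v :=
  Real.sqrt_nonneg _

theorem vecNorm2_sq {ι : Type*} [Fintype ι] (v : ι → ℝ) : vecNorm2 v ^ 2 = v ⬝ᵥ v := by
  rw [vecNorm2, Real.sq_sqrt (Finset.sum_nonneg fun i _ => sq_nonneg _)]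
  simp only [dotProduct, sq]

theorem dotProduct_le_vecNorm2 {ι : Type*} [Fintype ι] (u v : ι → ℝ) :
    u ⬝ᵥ v ≤ vecNorm2 u * vecNorm2 v :=
  Real.sum_mul_le_sqrt_mul_sqrt _ _ _

theorem vecNorm2_sub_comm {ι : Type*} [Fintype ι] (u v : ι → ℝ) :
    vecNorm2 (u - v) = vecNorm2 (v - u) := by
  unfold vecNorm2
  congr 1
  exact Finset.sum_congr rfl fun i _ => by simp only [Pi.sub_apply]; ring

theorem vecNorm2_mulVec_le {m n : Type*} [Fintype m] [Fintype n] (M : Matrix m n ℝ) (v : n → ℝ) :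
    vecNorm2 (M *ᵥ v) ≤ frobNorm M * vecNorm2 v := by
  unfold vecNorm2 frobNorm
  have hM : 0 ≤ ∑ i, ∑ j, M i j ^ 2 := by positivity
  rw [← Real.sqrt_mul hM, Finset.sum_mul]
  exact Real.sqrt_le_sqrt
    (Finset.sum_le_sum fun i _ => Finset.sum_mul_sq_le_sq_mul_sq Finset.univ (M i) v)

/-- The tangent-line inequality for the convex function `|·|^p`. At a nonzero point it is
Bernoulli's inequality for the ratio `|y| / |x|`; at `0` the subgradient chosen is `0`, which is
what makes the kink at `p = 1` harmless. -/
theorem abs_rpow_tangent_le {p : ℝ} (hp : 1 ≤ p) (x y : ℝ) :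
    |x| ^ p + (if x = 0 then 0 else p * |x| ^ (p - 2) * x) * (y - x) ≤ |y| ^ p := by
  split_ifs with hx
  · subst hx
    rw [abs_zero, Real.zero_rpow (by linarith)]
    simpa using Real.rpow_nonneg (abs_nonneg y) p
  · have ha : 0 < |x| := abs_pos.mpr hx
    have hb := abs_nonneg y
    have hbern := one_add_mul_self_le_rpow_one_add (s := |y| / |x| - 1)
      (by linarith [div_nonneg hb ha.le]) hp
    rw [add_sub_cancel, Real.div_rpow hb ha.le, le_div_iff₀ (Real.rpow_pos_of_pos ha p)] at hbern
    have hpow : |x| ^ p = |x| ^ (p - 2) * |x| ^ 2 := by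
      rw [← Real.rpow_natCast, ← Real.rpow_add ha]; norm_num
    have hc : 0 < |x| ^ (p - 2) := Real.rpow_pos_of_pos ha _
    have hratio : |y| / |x| * |x| ^ 2 = |y| * |x| := by field_simp
    have hxy : x * y ≤ |y| * |x| := by
      rw [← abs_mul, mul_comm]; exact le_abs_self _
    have hmul : p * |x| ^ (p - 2) * (x * y) ≤ p * |x| ^ (p - 2) * (|y| * |x|) :=
      mul_le_mul_of_nonneg_left hxy (by positivity)
    have hexp : (1 + p * (|y| / |x| - 1)) * |x| ^ p
        = |x| ^ p + p * |x| ^ (p - 2) * (|y| * |x|) - p * |x| ^ (p - 2) * x ^ 2 := by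
      rw [hpow, ← hratio, ← sq_abs x]; ring
    linarith

/-- `A (AᵀA)⁻¹` expands Euclidean norms by at most the square root of a bound on
`‖(AᵀA)⁻¹‖_F`, because `‖A (AᵀA)⁻¹ r‖₂² = r ⬝ (AᵀA)⁻¹ r`. -/
theorem vecNorm2_mulVec_gram_inv_le {n d : ℕ} (A : Matrix (Fin n) (Fin d) ℝ)
    (hA : IsUnit (Aᵀ * A).det) {κ : ℝ} (hκ : 0 ≤ κ) (h : frobNorm ((Aᵀ * A)⁻¹) ≤ κ)
    (r : Fin d → ℝ) :
    vecNorm2 (A *ᵥ ((Aᵀ * A)⁻¹ *ᵥ r)) ≤ Real.sqrt κ * vecNorm2 r := by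
  set w := (Aᵀ * A)⁻¹ *ᵥ r with hw
  have hsq : vecNorm2 (A *ᵥ w) ^ 2 = w ⬝ᵥ r := by
    rw [vecNorm2_sq, dotProduct_mulVec, vecMul_mulVec, ← dotProduct_mulVec, hw, mulVec_mulVec,
      mul_nonsing_inv _ hA, one_mulVec]
  have hr := vecNorm2_nonneg r
  refine abs_le_of_sq_le_sq' ?_ (by positivity) |>.2
  rw [hsq, mul_pow, Real.sq_sqrt hκ]
  calc w ⬝ᵥ r ≤ vecNorm2 w * vecNorm2 r := dotProduct_le_vecNorm2 _ _
    _ ≤ (κ * vecNorm2 r) * vecNorm2 r := by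
        gcongr
        exact (vecNorm2_mulVec_le _ r).trans (by gcongr)
    _ = κ * vecNorm2 r ^ 2 := by ring

/-- Lower bound on the projected gradient away from the optimum of `p`-norm minimization. -/
theorem projected_gradient_lower_bound
    {n d : ℕ}
    (A : Matrix (Fin n) (Fin d) ℝ) (b : Fin d → ℝ)
    (hA : IsUnit (Aᵀ * A).det)
    (p : ℝ) (hp : 1 ≤ p)
    (xhat xstar g : Fin n → ℝ)
    (hg : ∀ i, g i = if xhat i = 0 then 0 else p * |xhat i| ^ (p - 2) * xhat i)
    (hxstar_feas : Aᵀ *ᵥ xstar = b)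
    (hxstar_min : ∀ x : Fin n → ℝ, Aᵀ *ᵥ x = b → pnormP p xstar ≤ pnormP p x)
    (ε κ : ℝ) (hε0 : 0 < ε) (hε1 : ε < 1) (hκ : 1 < κ)
    (hfeas : vecNorm2 (Aᵀ *ᵥ xhat - b) ≤ ε / (2 * κ ^ (3.5 : ℝ)))
    (hfar : (1 + ε) * pnormP p xstar < pnormP p xhat)
    (hopt : 1 / κ ≤ pnormP p xstar)
    (hAA : frobNorm (Aᵀ * A) ≤ κ) (hAAinv : frobNorm ((Aᵀ * A)⁻¹) ≤ κ)
    (hgn : vecNorm2 g ≤ κ) (hdist : vecNorm2 (xstar - xhat) ≤ κ) :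
    ε / (2 * κ ^ 2) ≤
      vecNorm2 (((1 : Matrix (Fin n) (Fin n) ℝ) - A * (Aᵀ * A)⁻¹ * Aᵀ) *ᵥ g) := by
  have hκ0 : 0 < κ := by linarith
  have hgap : ε / κ < g ⬝ᵥ (xhat - xstar) := by
    have hconv : pnormP p xhat - g ⬝ᵥ (xhat - xstar) ≤ pnormP p xstar := by
      unfold pnormP dotProduct
      rw [← Finset.sum_sub_distrib]
      refine Finset.sum_le_sum fun i _ => ?_
      have h := abs_rpow_tangent_le hp (xhat i) (xstar i)
      rw [← hg i] at h
      simp only [Pi.sub_apply]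
      linarith
    have hε : ε / κ ≤ ε * pnormP p xstar := by
      rw [div_eq_mul_one_div]; gcongr
    linarith
  set Q := A * (Aᵀ * A)⁻¹ * Aᵀ with hQ
  have hQT : Qᵀ = Q := by
    simp [hQ, transpose_mul, transpose_nonsing_inv, Matrix.mul_assoc]
  have hsplit : g ⬝ᵥ (xhat - xstar)
      = ((1 - Q) *ᵥ g) ⬝ᵥ (xhat - xstar) + g ⬝ᵥ (A *ᵥ ((Aᵀ * A)⁻¹ *ᵥ (Aᵀ *ᵥ xhat - b))) := by
    have hres : A *ᵥ ((Aᵀ * A)⁻¹ *ᵥ (Aᵀ *ᵥ xhat - b)) = Q *ᵥ (xhat - xstar) := by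
      rw [← hxstar_feas, ← mulVec_sub, mulVec_mulVec, mulVec_mulVec, hQ, Matrix.mul_assoc]
    rw [hres, dotProduct_mulVec, ← mulVec_transpose, hQT, sub_mulVec, one_mulVec,
      sub_dotProduct]
    ring
  have hfirst : ((1 - Q) *ᵥ g) ⬝ᵥ (xhat - xstar) ≤ vecNorm2 ((1 - Q) *ᵥ g) * κ := by
    refine (dotProduct_le_vecNorm2 _ _).trans ?_
    rw [vecNorm2_sub_comm]
    exact mul_le_mul_of_nonneg_left hdist (vecNorm2_nonneg _)
  have hsecond : g ⬝ᵥ (A *ᵥ ((Aᵀ * A)⁻¹ *ᵥ (Aᵀ *ᵥ xhat - b))) ≤ ε / (2 * κ ^ 2) := by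
    have hpow : κ ^ (3.5 : ℝ) = κ ^ 3 * Real.sqrt κ := by
      rw [Real.sqrt_eq_rpow, ← Real.rpow_natCast κ 3, ← Real.rpow_add hκ0]; norm_num
    have hs : 0 < Real.sqrt κ := Real.sqrt_pos.mpr hκ0
    calc _ ≤ vecNorm2 g * vecNorm2 (A *ᵥ ((Aᵀ * A)⁻¹ *ᵥ (Aᵀ *ᵥ xhat - b))) :=
          dotProduct_le_vecNorm2 _ _
      _ ≤ κ * (Real.sqrt κ * (ε / (2 * κ ^ (3.5 : ℝ)))) := by
          refine mul_le_mul hgn ?_ (vecNorm2_nonneg _) hκ0.le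
          exact (vecNorm2_mulVec_gram_inv_le A hA hκ0.le hAAinv _).trans (by gcongr)
      _ = ε / (2 * κ ^ 2) := by rw [hpow]; field_simp
  have hweaken : ε / (2 * κ ^ 2) ≤ ε / (2 * κ) := by
    gcongr
    nlinarith
  have hhalf : ε / κ = ε / (2 * κ) + ε / (2 * κ) := by field_simp; ring
  have hmain : ε / (2 * κ) ≤ vecNorm2 ((1 - Q) *ᵥ g) * κ := by linarith
  calc ε / (2 * κ ^ 2) = ε / (2 * κ) / κ := by field_simp
    _ ≤ vecNorm2 ((1 - Q) *ᵥ g) := (div_le_iff₀ hκ0).mpr hmain
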